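/- Let X and Y be finitely supported random variables (jointly distributed) such that the support of Y has cardinality at most 2^λ. Then H̃∞(X|Y) ≥ H∞(X,Y) − λ ≥ H∞(X) − λ. -/

import Mathlib

open scoped Classical BigOperators

/-- Probability of an event `E` under a finitely supported probability mass function `p`. -/
noncomputable def pr {Ω : Type*} [Fintype Ω] (p : Ω → ℝ) (E : Ω → Prop) : ℝ :=
  ∑ ω : Ω, if E ω then p ω else 0

/-- Min-entropy `H∞(X) = -log₂ max_x Pr[X = x]`. -/
noncomputable def minEntropy {Ω α : Type*} [Fintype Ω] [Fintype α]
    (p : Ω → ℝ) (X : Ω → α) : ℝ :=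
  - Real.logb 2 (⨆ x : α, pr p (fun ω => X ω = x))

/-- Conditional (average) min-entropy
`H̃∞(X|Z) = -log₂ Σ_z Pr[Z=z] · max_x Pr[X=x | Z=z] = -log₂ Σ_z max_x Pr[X=x ∧ Z=z]`. -/
noncomputable def condMinEntropy {Ω α β : Type*} [Fintype Ω] [Fintype α] [Fintype β]
    (p : Ω → ℝ) (X : Ω → α) (Z : Ω → β) : ℝ :=
  - Real.logb 2 (∑ z : β, ⨆ x : α, pr p (fun ω => X ω = x ∧ Z ω = z))

theorem pr_nonneg_aux {Ω : Type*} [Fintype Ω] (p : Ω → ℝ) (hp : ∀ ω, 0 ≤ p ω) (E : Ω → Prop) :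
    0 ≤ pr p E := by
  unfold pr
  refine Finset.sum_nonneg fun ω _ => ?_
  split_ifs
  · exact hp ω
  · exact le_rfl

theorem pr_mono_aux {Ω : Type*} [Fintype Ω] (p : Ω → ℝ) (hp : ∀ ω, 0 ≤ p ω) (E F : Ω → Prop)
    (h : ∀ ω, E ω → F ω) : pr p E ≤ pr p F := by
  unfold pr
  refine Finset.sum_le_sum fun ω _ => ?_
  by_cases hE : E ω
  · simp [hE, h ω hE]
  · by_cases hF : F ω
    · simp [hE, hF, hp ω]
    · simp [hE, hF]

theorem le_pr_aux {Ω : Type*} [Fintype Ω] (p : Ω → ℝ) (hp : ∀ ω, 0 ≤ p ω) (E : Ω → Prop)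
    (w : Ω) (h : E w) : p w ≤ pr p E := by
  unfold pr
  have := Finset.single_le_sum (f := fun ω => if E ω then p ω else 0) (s := Finset.univ)
    (fun ω _ => by
      show 0 ≤ if E ω then p ω else 0
      split_ifs
      · exact hp ω
      · exact le_rfl) (Finset.mem_univ w)
  simpa [h] using this

/-- If the support of `Y` has cardinality at most `2^λ`, then
`H̃∞(X|Y) ≥ H∞(X,Y) − λ ≥ H∞(X) − λ`. -/
theorem stmt0 {Ω α β : Type*} [Fintype Ω] [Fintype α] [Fintype β]
    (p : Ω → ℝ) (hp : ∀ ω, 0 ≤ p ω) (hp1 : (∑ ω : Ω, p ω) = 1)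
    (X : Ω → α) (Y : Ω → β) (lam : ℝ)
    (hsupp : ((Finset.univ.filter
        (fun y : β => 0 < pr p (fun ω => Y ω = y))).card : ℝ) ≤ (2 : ℝ) ^ lam) :
    condMinEntropy p X Y ≥ minEntropy p (fun ω => (X ω, Y ω)) - lam ∧
      minEntropy p (fun ω => (X ω, Y ω)) - lam ≥ minEntropy p X - lam := by
  obtain ⟨w, hw⟩ : ∃ w, 0 < p w := by
    by_contra! hcon
    have : ∑ ω : Ω, p ω ≤ 0 := Finset.sum_nonpos fun ω _ => hcon ω
    linarith
  have : Nonempty α := ⟨X w⟩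
  have : Nonempty β := ⟨Y w⟩
  have bX : BddAbove (Set.range fun x : α => pr p (fun ω => X ω = x)) :=
    (Set.finite_range _).bddAbove
  have bXY : BddAbove (Set.range fun q : α × β => pr p (fun ω => (X ω, Y ω) = q)) :=
    (Set.finite_range _).bddAbove
  have bZ : ∀ z : β, BddAbove (Set.range fun x : α => pr p (fun ω => X ω = x ∧ Y ω = z)) :=
    fun z => (Set.finite_range _).bddAbove
  unfold condMinEntropy minEntropy
  set M := ⨆ q : α × β, pr p (fun ω => (X ω, Y ω) = q) with hM
  have hMpos : 0 < M :=
    lt_of_lt_of_le hw ((le_pr_aux p hp (fun ω => (X ω, Y ω) = (X w, Y w)) w rfl).trans (le_ciSup bXY (X w, Y w)))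
  have hMX : M ≤ ⨆ x : α, pr p (fun ω => X ω = x) := by
    refine ciSup_le fun q => ?_
    refine le_trans (pr_mono_aux p hp _ _ ?_) (le_ciSup bX q.1)
    intro ω h
    exact congrArg Prod.fst h
  have hnn : ∀ z : β, 0 ≤ ⨆ x : α, pr p (fun ω => X ω = x ∧ Y ω = z) := fun z =>
    (pr_nonneg_aux p hp _).trans (le_ciSup (bZ z) (X w))
  have hSpos : 0 < ∑ z : β, ⨆ x : α, pr p (fun ω => X ω = x ∧ Y ω = z) := by
    refine Finset.sum_pos' (fun z _ => hnn z) ⟨Y w, Finset.mem_univ _, ?_⟩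
    exact lt_of_lt_of_le hw
      ((le_pr_aux p hp (fun ω => X ω = X w ∧ Y ω = Y w) w ⟨rfl, rfl⟩).trans (le_ciSup (bZ (Y w)) (X w)))
  have hS : ∑ z : β, (⨆ x : α, pr p (fun ω => X ω = x ∧ Y ω = z)) ≤ (2 : ℝ) ^ lam * M := by
    calc ∑ z : β, (⨆ x : α, pr p (fun ω => X ω = x ∧ Y ω = z))
        ≤ ∑ z : β, (if 0 < pr p (fun ω => Y ω = z) then M else 0) := by
          refine Finset.sum_le_sum fun z _ => ?_
          refine ciSup_le fun x => ?_
          split_ifs with hz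
          · refine le_trans (pr_mono_aux p hp _ _ ?_) (le_ciSup bXY (x, z))
            rintro ω ⟨h1, h2⟩
            exact Prod.ext h1 h2
          · exact (pr_mono_aux p hp _ _ fun ω h => h.2).trans (not_lt.mp hz)
      _ = ((Finset.univ.filter
            (fun y : β => 0 < pr p (fun ω => Y ω = y))).card : ℝ) * M := by
          rw [← Finset.sum_filter, Finset.sum_const, nsmul_eq_mul]
      _ ≤ (2 : ℝ) ^ lam * M := mul_le_mul_of_nonneg_right hsupp hMpos.le
  have h1 := Real.logb_le_logb_of_le (b := 2) (by norm_num) hSpos hS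
  have h2 := Real.logb_le_logb_of_le (b := 2) (by norm_num) hMpos hMX
  have h3 : Real.logb 2 ((2 : ℝ) ^ lam * M) = lam + Real.logb 2 M := by
    rw [Real.logb_mul (Real.rpow_pos_of_pos (by norm_num) _).ne' hMpos.ne',
      Real.logb_rpow (by norm_num) (by norm_num)]
  constructor <;> linarith
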